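/- arXiv:2107.11900 — 6 statements merged into one kernel-verified Lean document; each statement's English description precedes it below -/
import Mathlib

section
/- There exists a coloring of the Euclidean plane ℝ² with 7 colors avoiding unit distance; that is, a function f : ℝ² → Fin 7 such that f(x) ≠ f(y) whenever ‖x − y‖ = 1 (the Isbell hexagonal tiling). -/
/-- The brick index (row) of a point of height `5 * y`, with rows of height `3`. -/
noncomputable def brickRow (y : ℝ) : ℤ := ⌊5 * y / 3⌋

/-- The position of the brick in its row; bricks have width `4`, row `j` is shifted by `10 * j`. -/
noncomputable def brickCol (x y : ℝ) : ℤ := ⌊(5 * x - 10 * (brickRow y : ℝ)) / 4⌋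

theorem brick_key (x y x' y' : ℝ) (h : (x - x') ^ 2 + (y - y') ^ 2 = 1)
    (hc : brickCol x y % 7 = brickCol x' y' % 7) : False := by
  obtain ⟨m, hm⟩ : ∃ m : ℤ, brickCol x y - brickCol x' y' = 7 * m :=
    ⟨(brickCol x y - brickCol x' y') / 7, by omega⟩
  obtain ⟨k, hk⟩ : ∃ k : ℤ, brickRow y - brickRow y' = k := ⟨_, rfl⟩
  have a1 := Int.floor_le (5 * y / 3)
  have a2 := Int.lt_floor_add_one (5 * y / 3)
  have b1 := Int.floor_le (5 * y' / 3)
  have b2 := Int.lt_floor_add_one (5 * y' / 3)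
  have c1 := Int.floor_le ((5 * x - 10 * (brickRow y : ℝ)) / 4)
  have c2 := Int.lt_floor_add_one ((5 * x - 10 * (brickRow y : ℝ)) / 4)
  have d1 := Int.floor_le ((5 * x' - 10 * (brickRow y' : ℝ)) / 4)
  have d2 := Int.lt_floor_add_one ((5 * x' - 10 * (brickRow y' : ℝ)) / 4)
  change (brickRow y : ℝ) ≤ _ at a1
  change _ < (brickRow y : ℝ) + 1 at a2
  change (brickRow y' : ℝ) ≤ _ at b1
  change _ < (brickRow y' : ℝ) + 1 at b2
  change (brickCol x y : ℝ) ≤ _ at c1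
  change _ < (brickCol x y : ℝ) + 1 at c2
  change (brickCol x' y' : ℝ) ≤ _ at d1
  change _ < (brickCol x' y' : ℝ) + 1 at d2
  have hm' : (brickCol x y : ℝ) - brickCol x' y' = 7 * m := by exact_mod_cast hm
  have hk' : (brickRow y : ℝ) - brickRow y' = k := by exact_mod_cast hk
  obtain ⟨u, hu⟩ : ∃ u, u = 5 * (x - x') := ⟨_, rfl⟩
  obtain ⟨v, hv⟩ : ∃ v, v = 5 * (y - y') := ⟨_, rfl⟩
  have huv : u ^ 2 + v ^ 2 = 25 := by rw [hu, hv]; linarith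
  have v1 : v < 3 * k + 3 := by linarith
  have v2 : 3 * k - 3 < v := by linarith
  have u1 : u < 10 * k + 28 * m + 4 := by linarith
  have u2 : 10 * k + 28 * m - 4 < u := by linarith
  have ub : |u| ≤ 5 := abs_le_of_sq_le_sq (by linarith [sq_nonneg v]) (by norm_num)
  have vb : |v| ≤ 5 := abs_le_of_sq_le_sq (by linarith [sq_nonneg u]) (by norm_num)
  rw [abs_le] at ub vb
  have k1 : 3 * k < 8 := by
    have : (3 * k : ℝ) < 8 := by linarith
    exact_mod_cast this
  have k2 : -8 < 3 * k := by
    have : (-8 : ℝ) < 3 * k := by linarith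
    exact_mod_cast this
  have m1 : 10 * k + 28 * m < 9 := by
    have : (10 * k + 28 * m : ℝ) < 9 := by linarith
    exact_mod_cast this
  have m2 : -9 < 10 * k + 28 * m := by
    have : (-9 : ℝ) < 10 * k + 28 * m := by linarith
    exact_mod_cast this
  have cases : (k = 0 ∧ m = 0) ∨ (k = 2 ∧ m = -1) ∨ (k = -2 ∧ m = 1) := by omega
  rcases cases with ⟨rfl, rfl⟩ | ⟨rfl, rfl⟩ | ⟨rfl, rfl⟩ <;> norm_num at u1 u2 v1 v2
  · have p : 0 < (4 - u) * (4 + u) := mul_pos (by linarith) (by linarith)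
    have q : 0 < (3 - v) * (3 + v) := mul_pos (by linarith) (by linarith)
    linarith
  · have p : 0 < (-4 - u) * (4 - u) := mul_pos (by linarith) (by linarith)
    have q : 0 < (v - 3) * (v + 3) := mul_pos (by linarith) (by linarith)
    linarith
  · have p : 0 < (u - 4) * (u + 4) := mul_pos (by linarith) (by linarith)
    have q : 0 < (-3 - v) * (3 - v) := mul_pos (by linarith) (by linarith)
    linarith

theorem plane_seven_coloring :
    ∃ f : EuclideanSpace ℝ (Fin 2) → Fin 7,
      ∀ x y : EuclideanSpace ℝ (Fin 2), ‖x - y‖ = 1 → f x ≠ f y := by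
  refine ⟨fun p => ⟨(brickCol (p 0) (p 1) % 7).toNat, by omega⟩, ?_⟩
  intro x y h hf
  have h2 : (x 0 - y 0) ^ 2 + (x 1 - y 1) ^ 2 = 1 := by
    have := EuclideanSpace.real_norm_sq_eq (x - y)
    rw [h, Fin.sum_univ_two] at this
    simp at this
    linarith
  refine brick_key _ _ _ _ h2 ?_
  have := congrArg Fin.val hf
  simp only at this
  omega
end

section
/- There exists a function f : ℝ² → Fin 7 such that for all points x, y ∈ ℝ², if 1 ≤ ‖x − y‖ ≤ √7 / 2 then f(x) ≠ f(y). Equivalently, for every ε with 0 ≤ ε ≤ √7/2 − 1, seven colors suffice to color the plane so that no two points whose distance lies in the interval [1, 1 + ε] receive the same color. -/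
/-- Half-open hexagonal cells cover the plane (in the coordinates used below). -/
lemma hex_cover (P R : ℝ) : ∃ c : ℤ × ℤ,
    -1 ≤ P - (2 * c.1 + c.2) ∧ P - (2 * c.1 + c.2) < 1 ∧
    -1 ≤ R - (c.1 + 2 * c.2) ∧ R - (c.1 + 2 * c.2) < 1 ∧
    -1 ≤ (R - (c.1 + 2 * c.2)) - (P - (2 * c.1 + c.2)) ∧
    (R - (c.1 + 2 * c.2)) - (P - (2 * c.1 + c.2)) < 1 := by
  obtain ⟨m, s, hs0, hs1, hs⟩ : ∃ (m : ℤ) (s : ℝ), 0 ≤ s ∧ s < 1 ∧ (2 * P - R) / 3 = m + s :=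
    ⟨⌊(2 * P - R) / 3⌋, Int.fract _, Int.fract_nonneg _, Int.fract_lt_one _,
      (Int.floor_add_fract _).symm⟩
  obtain ⟨n, t, ht0, ht1, ht⟩ : ∃ (n : ℤ) (t : ℝ), 0 ≤ t ∧ t < 1 ∧ (2 * R - P) / 3 = n + t :=
    ⟨⌊(2 * R - P) / 3⌋, Int.fract _, Int.fract_nonneg _, Int.fract_lt_one _,
      (Int.floor_add_fract _).symm⟩
  have hP : P = 2 * m + n + (2 * s + t) := by linarith
  have hR : R = m + 2 * n + (s + 2 * t) := by linarith
  subst hP hR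
  by_cases h1 : 2 * s + t < 1
  · by_cases h2 : s + 2 * t < 1
    · refine ⟨(m, n), ?_, ?_, ?_, ?_, ?_, ?_⟩ <;> push_cast <;> linarith
    · refine ⟨(m, n + 1), ?_, ?_, ?_, ?_, ?_, ?_⟩ <;> push_cast <;> linarith
  · by_cases h2 : s + 2 * t < 1
    · refine ⟨(m + 1, n), ?_, ?_, ?_, ?_, ?_, ?_⟩ <;> push_cast <;> linarith
    · by_cases h3 : 2 * s + t < 2
      · by_cases h4 : t - s < 0
        · by_cases h5 : s + 2 * t < 2
          · refine ⟨(m + 1, n), ?_, ?_, ?_, ?_, ?_, ?_⟩ <;> push_cast <;> linarith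
          · refine ⟨(m + 1, n + 1), ?_, ?_, ?_, ?_, ?_, ?_⟩ <;> push_cast <;> linarith
        · refine ⟨(m, n + 1), ?_, ?_, ?_, ?_, ?_, ?_⟩ <;> push_cast <;> linarith
      · by_cases h5 : s + 2 * t < 2
        · refine ⟨(m + 1, n), ?_, ?_, ?_, ?_, ?_, ?_⟩ <;> push_cast <;> linarith
        · refine ⟨(m + 1, n + 1), ?_, ?_, ?_, ?_, ?_, ?_⟩ <;> push_cast <;> linarith

/-- The open hexagon has circumradius at most one (after scaling). -/
lemma hex_small (p q : ℝ) (h1 : -2 < p) (h2 : p < 2) (h3 : -2 < q) (h4 : q < 2)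
    (h5 : -2 < q - p) (h6 : q - p < 2) : p ^ 2 - p * q + q ^ 2 < 4 := by
  rcases le_total 0 p with hp | hp <;> rcases le_total 0 q with hq | hq <;>
    rcases le_total p q with hr | hr <;>
    nlinarith [mul_nonneg (sub_nonneg.2 h1.le) (sub_nonneg.2 h2.le),
      mul_pos (sub_pos.2 h1) (sub_pos.2 h2), mul_pos (sub_pos.2 h3) (sub_pos.2 h4),
      mul_pos (sub_pos.2 h5) (sub_pos.2 h6),
      mul_nonneg_of_nonpos_of_nonpos (a := -|p|) (b := -|q|) (by simp) (by simp),
      mul_self_nonneg p]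

/-- The key estimate near a nearest lattice vector. -/
lemma hex_far (p q : ℝ) (hp : 3 < p) (hq : 2 < q) : 7 < p ^ 2 - p * q + q ^ 2 := by
  nlinarith [sq_nonneg (p - 3 - (q - 2)), mul_pos (sub_pos.2 hp) (sub_pos.2 hq)]

lemma hex_main (A B : ℝ) (M N : ℤ) (hMN : (7 : ℤ) ∣ M + 5 * N)
    (h1 : -2 < A - (2 * M + N)) (h2 : A - (2 * M + N) < 2)
    (h3 : -2 < B - (M + 2 * N)) (h4 : B - (M + 2 * N) < 2)
    (h5 : -2 < (B - (M + 2 * N)) - (A - (2 * M + N)))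
    (h6 : (B - (M + 2 * N)) - (A - (2 * M + N)) < 2)
    (hlo : 4 ≤ A ^ 2 - A * B + B ^ 2) (hhi : A ^ 2 - A * B + B ^ 2 ≤ 7) : False := by
  have bA : |A| < 4 := abs_lt_of_sq_lt_sq (by nlinarith [sq_nonneg (A - 2 * B)]) (by norm_num)
  have bA1 : A < 3.1 := by nlinarith [sq_nonneg (A - 2 * B)]
  have bA2 : -3.1 < A := by nlinarith [sq_nonneg (A - 2 * B)]
  have bB1 : B < 3.1 := by nlinarith [sq_nonneg (B - 2 * A)]
  have bB2 : -3.1 < B := by nlinarith [sq_nonneg (B - 2 * A)]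
  have bC1 : B - A < 3.1 := by nlinarith [sq_nonneg (B + A)]
  have bC2 : -3.1 < B - A := by nlinarith [sq_nonneg (B + A)]
  have e1 : 2 * M + N < 6 := by
    have : ((2 * M + N : ℤ) : ℝ) < (6 : ℤ) := by push_cast; linarith
    exact_mod_cast this
  have e2 : -6 < 2 * M + N := by
    have : ((-6 : ℤ) : ℝ) < (2 * M + N : ℤ) := by push_cast; linarith
    exact_mod_cast this
  have e3 : M + 2 * N < 6 := by
    have : ((M + 2 * N : ℤ) : ℝ) < (6 : ℤ) := by push_cast; linarith
    exact_mod_cast this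
  have e4 : -6 < M + 2 * N := by
    have : ((-6 : ℤ) : ℝ) < (M + 2 * N : ℤ) := by push_cast; linarith
    exact_mod_cast this
  have e5 : N - M < 6 := by
    have : ((N - M : ℤ) : ℝ) < (6 : ℤ) := by push_cast; linarith
    exact_mod_cast this
  have e6 : -6 < N - M := by
    have : ((-6 : ℤ) : ℝ) < (N - M : ℤ) := by push_cast; linarith
    exact_mod_cast this
  have hc : (M = 0 ∧ N = 0) ∨ (M = 2 ∧ N = 1) ∨ (M = -1 ∧ N = 3) ∨ (M = -3 ∧ N = 2) ∨
      (M = -2 ∧ N = -1) ∨ (M = 1 ∧ N = -3) ∨ (M = 3 ∧ N = -2) := by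
    have f1 : -4 < M := by omega
    have f2 : M < 4 := by omega
    interval_cases M <;> omega
  rcases hc with h | h | h | h | h | h | h <;> obtain ⟨rfl, rfl⟩ := h <;> push_cast at *
  · have := hex_small A B (by linarith) (by linarith) (by linarith) (by linarith)
      (by linarith) (by linarith)
    linarith
  · have := hex_far A B (by linarith) (by linarith)
    nlinarith
  · have := hex_far B (B - A) (by linarith) (by linarith)
    nlinarith
  · have := hex_far (B - A) (-A) (by linarith) (by linarith)
    nlinarith
  · have := hex_far (-A) (-B) (by linarith) (by linarith)
    nlinarith
  · have := hex_far (-B) (A - B) (by linarith) (by linarith)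
    nlinarith
  · have := hex_far (A - B) A (by linarith) (by linarith)
    nlinarith

theorem plane_seven_coloring_interval :
    ∃ f : EuclideanSpace ℝ (Fin 2) → Fin 7,
      ∀ x y : EuclideanSpace ℝ (Fin 2),
        1 ≤ ‖x - y‖ → ‖x - y‖ ≤ Real.sqrt 7 / 2 → f x ≠ f y := by
  choose g hg using hex_cover
  obtain ⟨k, hk⟩ : ∃ k : ℝ, k ^ 2 = 1 / 3 := ⟨Real.sqrt (1 / 3), Real.sq_sqrt (by norm_num)⟩
  let c : EuclideanSpace ℝ (Fin 2) → ℤ × ℤ := fun x => g (4 * k * x 0) (2 * k * x 0 + 2 * x 1)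
  refine ⟨fun x => ⟨(((c x).1 + 5 * (c x).2) % 7).toNat, by omega⟩, ?_⟩
  intro x y hlo hhi hf
  have hf' : (((c x).1 + 5 * (c x).2) % 7).toNat = (((c y).1 + 5 * (c y).2) % 7).toNat :=
    congrArg Fin.val hf
  have hd : (7 : ℤ) ∣ ((c x).1 - (c y).1) + 5 * ((c x).2 - (c y).2) := by omega
  have hn : ‖x - y‖ ^ 2 = (x 0 - y 0) ^ 2 + (x 1 - y 1) ^ 2 := by
    rw [EuclideanSpace.norm_sq_eq]
    simp [Fin.sum_univ_two]
  have hlo2 : 1 ≤ ‖x - y‖ ^ 2 := by nlinarith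
  have hhi2 : ‖x - y‖ ^ 2 ≤ 7 / 4 := by
    have h7 : Real.sqrt 7 ^ 2 = 7 := Real.sq_sqrt (by norm_num)
    nlinarith [norm_nonneg (x - y), Real.sqrt_nonneg 7]
  obtain ⟨a1, a2, a3, a4, a5, a6⟩ := hg (4 * k * x 0) (2 * k * x 0 + 2 * x 1)
  obtain ⟨b1, b2, b3, b4, b5, b6⟩ := hg (4 * k * y 0) (2 * k * y 0 + 2 * y 1)
  have hQ : (4 * k * x 0 - 4 * k * y 0) ^ 2
      - (4 * k * x 0 - 4 * k * y 0) * ((2 * k * x 0 + 2 * x 1) - (2 * k * y 0 + 2 * y 1))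
      + ((2 * k * x 0 + 2 * x 1) - (2 * k * y 0 + 2 * y 1)) ^ 2 = 4 * ‖x - y‖ ^ 2 := by
    rw [hn]
    linear_combination 12 * (x 0 - y 0) ^ 2 * hk
  refine hex_main (4 * k * x 0 - 4 * k * y 0)
    ((2 * k * x 0 + 2 * x 1) - (2 * k * y 0 + 2 * y 1)) _ _ hd ?_ ?_ ?_ ?_ ?_ ?_ ?_ ?_
  all_goals first | (rw [hQ]; linarith) | (simp only [c]; push_cast; linarith)
end

section
/- There exists a coloring of the sphere of radius √(1/2) in ℝ³ with 4 colors avoiding unit distance; that is, a function f from {x ∈ ℝ³ : ‖x‖ = √(1/2)} to a 4-element set such that f(x) ≠ f(y) whenever ‖x − y‖ = 1 (obtained by projecting the faces of a regular octahedron inscribed in the sphere). -/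
/-- Colour of a sign vector: the four pairs of opposite octants, with the boundary distributed. -/
def octColor (s : SignType × SignType × SignType) : Fin 4 :=
  if s ∈ [(1,1,1),(1,0,1),(1,1,0),(1,0,0),(-1,-1,-1),(-1,0,-1),(-1,-1,0),(-1,0,0)] then 0
  else if s ∈ [(-1,1,1),(0,1,1),(0,1,0),(1,-1,0),(1,-1,-1),(0,-1,-1),(0,-1,0),(-1,1,0)] then 1
  else if s ∈ [(1,-1,1),(0,0,1),(0,1,-1),(-1,1,-1),(0,0,-1),(0,-1,1)] then 2
  else 3

set_option maxRecDepth 100000 in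
set_option maxHeartbeats 4000000 in
theorem octColor_spec : ∀ a b c a' b' c' : SignType, ¬ (a = 0 ∧ b = 0 ∧ c = 0) →
    ¬ (a' = 0 ∧ b' = 0 ∧ c' = 0) → octColor (a, b, c) = octColor (a', b', c') →
    (0 ≤ a * a' ∧ 0 ≤ b * b' ∧ 0 ≤ c * c' ∧ (a * a' = 1 ∨ b * b' = 1 ∨ c * c' = 1)) ∨
    (a * a' ≤ 0 ∧ b * b' ≤ 0 ∧ c * c' ≤ 0 ∧ (a * a' = -1 ∨ b * b' = -1 ∨ c * c' = -1)) := by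
  decide

theorem sphere_four_coloring_octahedron :
    ∃ f : {x : EuclideanSpace ℝ (Fin 3) // ‖x‖ = Real.sqrt (1 / 2)} → Fin 4,
      ∀ x y : {x : EuclideanSpace ℝ (Fin 3) // ‖x‖ = Real.sqrt (1 / 2)},
        ‖(x : EuclideanSpace ℝ (Fin 3)) - (y : EuclideanSpace ℝ (Fin 3))‖ = 1 →
          f x ≠ f y := by
  refine ⟨fun x => octColor (SignType.sign (x.1 0), SignType.sign (x.1 1),
    SignType.sign (x.1 2)), ?_⟩
  rintro ⟨x, hx⟩ ⟨y, hy⟩ hxy hc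
  have key : ∀ z : EuclideanSpace ℝ (Fin 3), ‖z‖ ^ 2 = z 0 ^ 2 + z 1 ^ 2 + z 2 ^ 2 := by
    intro z
    simp [EuclideanSpace.norm_sq_eq, Fin.sum_univ_three]
  have h1 := key x
  have h2 := key y
  have h3 := key (x - y)
  rw [hx, Real.sq_sqrt (by norm_num)] at h1
  rw [hy, Real.sq_sqrt (by norm_num)] at h2
  dsimp only at hxy hc
  rw [hxy] at h3
  simp only [PiLp.sub_apply] at h3
  have hdot : x 0 * y 0 + x 1 * y 1 + x 2 * y 2 = 0 := by linarith
  have nz : ∀ z : EuclideanSpace ℝ (Fin 3), 1 / 2 = z 0 ^ 2 + z 1 ^ 2 + z 2 ^ 2 →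
      ¬ (SignType.sign (z 0) = 0 ∧ SignType.sign (z 1) = 0 ∧ SignType.sign (z 2) = 0) := by
    rintro z hz ⟨h0, h1, h2⟩
    rw [sign_eq_zero_iff] at h0 h1 h2
    rw [h0, h1, h2] at hz
    norm_num at hz
  have := octColor_spec _ _ _ _ _ _ (nz x h1) (nz y h2) hc
  simp only [← sign_mul, sign_nonneg_iff, sign_nonpos_iff, sign_eq_one_iff,
    sign_eq_neg_one_iff] at this
  rcases this with ⟨a, b, c, d | d | d⟩ | ⟨a, b, c, d | d | d⟩ <;> linarith
end

section
/- For every radius r with 0 < r ≤ √(3/8), there is a coloring of the sphere of radius r in ℝ³ with 6 colors avoiding unit distance; that is, a function f from {x ∈ ℝ³ : ‖x‖ = r} to a 6-element set such that f(x) ≠ f(y) whenever ‖x − y‖ = 1 (obtained by projecting the six faces of an inscribed cube onto the sphere). -/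
/-- Two points of one closed cube face at squared distance `1` are opposite vertices of it. -/
theorem cube_face_key (N a b c p q s : ℝ) (hN : 0 < N) (hN' : N ≤ 3 / 8)
    (hx : a ^ 2 + b ^ 2 + c ^ 2 = N) (hy : p ^ 2 + q ^ 2 + s ^ 2 = N)
    (hd : (a - p) ^ 2 + (b - q) ^ 2 + (c - s) ^ 2 = 1)
    (hb : b ^ 2 ≤ a ^ 2) (hc : c ^ 2 ≤ a ^ 2) (hq : q ^ 2 ≤ p ^ 2) (hs : s ^ 2 ≤ p ^ 2)
    (hap : 0 ≤ a * p) :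
    a ^ 2 = b ^ 2 ∧ a ^ 2 = c ^ 2 ∧ p ^ 2 = q ^ 2 ∧ p ^ 2 = s ^ 2 ∧ b * q < 0 ∧ c * s < 0 := by
  have h1 : N / 3 ≤ a ^ 2 := by linarith
  have h2 : N / 3 ≤ p ^ 2 := by linarith
  have h3 : N / 3 ≤ a * p := by
    apply le_of_sq_le_sq _ hap
    nlinarith [mul_le_mul h1 h2 (by positivity) (by positivity)]
  have e1 : (b + q) ^ 2 + (c + s) ^ 2 ≤ 0 := by nlinarith
  have e2 : a ^ 2 = N / 3 := by nlinarith [sq_nonneg (b + q), sq_nonneg (c + s)]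
  have e3 : p ^ 2 = N / 3 := by nlinarith [sq_nonneg (b + q), sq_nonneg (c + s)]
  have e4 : b + q = 0 := by
    apply pow_eq_zero_iff (two_ne_zero) |>.1
    nlinarith [sq_nonneg (b + q), sq_nonneg (c + s)]
  have e5 : c + s = 0 := by
    apply pow_eq_zero_iff (two_ne_zero) |>.1
    nlinarith [sq_nonneg (b + q), sq_nonneg (c + s)]
  obtain rfl : q = -b := by linarith
  obtain rfl : s = -c := by linarith
  refine ⟨?_, ?_, ?_, ?_, ?_, ?_⟩ <;> nlinarith

open Classical in
/-- The color of a point: the cube face it projects to, with ties broken suitably. -/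
noncomputable def cubeColor (a b c : ℝ) : Fin 6 :=
  if a ^ 2 = b ^ 2 ∧ a ^ 2 = c ^ 2 ∧ b < 0 then (if 0 < c then 4 else 5)
  else if b ^ 2 ≤ a ^ 2 ∧ c ^ 2 ≤ a ^ 2 then (if 0 < a then 0 else 1)
  else if a ^ 2 ≤ b ^ 2 ∧ c ^ 2 ≤ b ^ 2 then (if 0 < b then 2 else 3)
  else (if 0 < c then 4 else 5)

/-- What the color says about a point. -/
theorem cubeColor_spec (a b c : ℝ) :
    ((b ^ 2 ≤ a ^ 2 ∧ c ^ 2 ≤ a ^ 2 ∧ (a ^ 2 = b ^ 2 → a ^ 2 = c ^ 2 → 0 ≤ b)) ∧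
      ((cubeColor a b c = 0 ∧ 0 ≤ a) ∨ (cubeColor a b c = 1 ∧ a ≤ 0))) ∨
    ((a ^ 2 ≤ b ^ 2 ∧ c ^ 2 ≤ b ^ 2 ∧ (b ^ 2 = a ^ 2 → b ^ 2 = c ^ 2 → False)) ∧
      ((cubeColor a b c = 2 ∧ 0 ≤ b) ∨ (cubeColor a b c = 3 ∧ b ≤ 0))) ∨
    ((a ^ 2 ≤ c ^ 2 ∧ b ^ 2 ≤ c ^ 2 ∧ (c ^ 2 = a ^ 2 → c ^ 2 = b ^ 2 → b < 0)) ∧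
      ((cubeColor a b c = 4 ∧ 0 ≤ c) ∨ (cubeColor a b c = 5 ∧ c ≤ 0))) := by
  unfold cubeColor
  generalize ha : a ^ 2 = A
  generalize hb : b ^ 2 = B
  generalize hc : c ^ 2 = C
  clear ha hb hc
  by_cases h1 : A = B ∧ A = C ∧ b < 0
  · right; right
    rw [if_pos h1]
    refine ⟨⟨by linarith, by linarith, fun _ _ => h1.2.2⟩, ?_⟩
    by_cases h : 0 < c
    · left; simp [h, h.le]
    · right; simp [h, not_lt.1 h]
  rw [if_neg h1]
  by_cases h2 : B ≤ A ∧ C ≤ A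
  · left
    rw [if_pos h2]
    refine ⟨⟨h2.1, h2.2, fun u v => not_lt.1 fun w => h1 ⟨u, v, w⟩⟩, ?_⟩
    by_cases h : 0 < a
    · left; simp [h, h.le]
    · right; simp [h, not_lt.1 h]
  rw [if_neg h2]
  by_cases h3 : A ≤ B ∧ C ≤ B
  · right; left
    rw [if_pos h3]
    refine ⟨⟨h3.1, h3.2, fun u v => h2 ⟨by linarith, by linarith⟩⟩, ?_⟩
    by_cases h : 0 < b
    · left; simp [h, h.le]
    · right; simp [h, not_lt.1 h]
  rw [if_neg h3]
  right; right
  refine ⟨⟨by grind, by grind, fun u v => by grind⟩, ?_⟩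
  by_cases h : 0 < c
  · left; simp [h, h.le]
  · right; simp [h, not_lt.1 h]

theorem cubeColor_ne (N a b c p q s : ℝ) (hN : 0 < N) (hN' : N ≤ 3 / 8)
    (hx : a ^ 2 + b ^ 2 + c ^ 2 = N) (hy : p ^ 2 + q ^ 2 + s ^ 2 = N)
    (hd : (a - p) ^ 2 + (b - q) ^ 2 + (c - s) ^ 2 = 1) :
    cubeColor a b c ≠ cubeColor p q s := by
  intro he
  have k1 := cube_face_key N a b c p q s hN hN' hx hy hd
  have k2 := cube_face_key N b a c q p s hN hN' (by linarith) (by linarith) (by linarith)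
  have k3 := cube_face_key N c a b s p q hN hN' (by linarith) (by linarith) (by linarith)
  have hx' := cubeColor_spec a b c
  have hy' := cubeColor_spec p q s
  rw [← he] at hy'
  generalize cubeColor a b c = k at hx' hy'
  rcases hx' with ⟨⟨x1, x2, x3⟩, ⟨e, x4⟩ | ⟨e, x4⟩⟩ | ⟨⟨x1, x2, x3⟩, ⟨e, x4⟩ | ⟨e, x4⟩⟩ |
    ⟨⟨x1, x2, x3⟩, ⟨e, x4⟩ | ⟨e, x4⟩⟩ <;> subst e <;> simp at hy' <;>
    obtain ⟨⟨y1, y2, y3⟩, y4⟩ := hy'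
  · obtain ⟨f1, f2, f3, f4, f5, f6⟩ := k1 x1 x2 y1 y2 (mul_nonneg x4 y4)
    exact absurd (mul_nonneg (x3 f1 f2) (y3 f3 f4)) (not_le.2 f5)
  · obtain ⟨f1, f2, f3, f4, f5, f6⟩ := k1 x1 x2 y1 y2 (mul_nonneg_of_nonpos_of_nonpos x4 y4)
    exact absurd (mul_nonneg (x3 f1 f2) (y3 f3 f4)) (not_le.2 f5)
  · obtain ⟨f1, f2, f3, f4, f5, f6⟩ := k2 x1 x2 y1 y2 (mul_nonneg x4 y4)
    exact x3 f1 f2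
  · obtain ⟨f1, f2, f3, f4, f5, f6⟩ := k2 x1 x2 y1 y2 (mul_nonneg_of_nonpos_of_nonpos x4 y4)
    exact x3 f1 f2
  · obtain ⟨f1, f2, f3, f4, f5, f6⟩ := k3 x1 x2 y1 y2 (mul_nonneg x4 y4)
    exact absurd (mul_pos_of_neg_of_neg (x3 f1 f2) (y3 f3 f4)) (not_lt.2 f6.le)
  · obtain ⟨f1, f2, f3, f4, f5, f6⟩ := k3 x1 x2 y1 y2 (mul_nonneg_of_nonpos_of_nonpos x4 y4)
    exact absurd (mul_pos_of_neg_of_neg (x3 f1 f2) (y3 f3 f4)) (not_lt.2 f6.le)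

theorem sphere_six_coloring_cube :
    ∀ r : ℝ, 0 < r → r ≤ Real.sqrt (3 / 8) →
      ∃ f : {x : EuclideanSpace ℝ (Fin 3) // ‖x‖ = r} → Fin 6,
        ∀ x y : {x : EuclideanSpace ℝ (Fin 3) // ‖x‖ = r},
          ‖(x : EuclideanSpace ℝ (Fin 3)) - (y : EuclideanSpace ℝ (Fin 3))‖ = 1 →
            f x ≠ f y := by
  intro r hr hr'
  refine ⟨fun x => cubeColor (x.1 0) (x.1 1) (x.1 2), ?_⟩
  rintro ⟨x, hx⟩ ⟨y, hy⟩ hd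
  have hN : r ^ 2 ≤ 3 / 8 := (Real.le_sqrt hr.le (by norm_num)).1 hr'
  have e (z : EuclideanSpace ℝ (Fin 3)) : z 0 ^ 2 + z 1 ^ 2 + z 2 ^ 2 = ‖z‖ ^ 2 := by
    rw [EuclideanSpace.real_norm_sq_eq, Fin.sum_univ_three]
  have hd' := e (x - y)
  simp only [PiLp.sub_apply] at hd'
  apply cubeColor_ne (r ^ 2) _ _ _ _ _ _ (by positivity) hN
  · rw [e, hx]
  · rw [e, hy]
  · rw [hd', hd]; norm_num
end

section
/- For every radius r with √(3/8) ≤ r ≤ √3/2, there is a coloring of the sphere of radius r in ℝ³ with 6 colors avoiding unit distance; that is, a function f from {x ∈ ℝ³ : ‖x‖ = r} to a 6-element set such that f(x) ≠ f(y) whenever ‖x − y‖ = 1 (obtained by projecting a regular dodecahedron onto the sphere and using antipodal pairs of faces as color classes). -/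
/-- Cone over the face of the dodecahedron with normal `(0,1,p)`. -/
def DodK (p a b c : ℝ) : Prop :=
  0 ≤ b ∧ a + p * b ≤ b + p * c ∧ -a + p * b ≤ b + p * c ∧
    p * a + c ≤ b + p * c ∧ -(p * a) + c ≤ b + p * c

/-- The rays of this cone which are not given the color of the face. -/
def DodBad (p a b c : ℝ) : Prop :=
  (b = c ∧ a = -c) ∨ (b = 0 ∧ c = (p + 1) * a) ∨ (b = 0 ∧ c = -((p + 1) * a))

def DodG (p a b c : ℝ) : Prop := DodK p a b c ∧ ¬ DodBad p a b c

def DodC (p a b c : ℝ) : Prop := DodG p a b c ∨ DodG p (-a) (-b) (-c)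

def DodS (p x y z : ℝ) : Prop :=
  DodC p x y z ∨ DodC p y z x ∨ DodC p z x y ∨
    DodC p x (-y) z ∨ DodC p y (-z) x ∨ DodC p z (-x) y

/-- Decomposition of a point of the cone along the five vertices. -/
def DodT (p a b c t1 t2 t3 t4 t5 : ℝ) : Prop :=
  0 ≤ t1 ∧ 0 ≤ t2 ∧ 0 ≤ t3 ∧ 0 ≤ t4 ∧ 0 ≤ t5 ∧
  a = t1 - t3 - (p - 1) * t4 + (p - 1) * t5 ∧
  b = t1 + p * t2 + t3 ∧
  c = t1 + (p - 1) * t2 + t3 + p * t4 + p * t5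

lemma dod_decomp {p a b c : ℝ} (hp : p ^ 2 = p + 1) (h1 : 1 < p) (h : DodK p a b c) :
    ∃ t1 t2 t3 t4 t5, DodT p a b c t1 t2 t3 t4 t5 := by
  obtain ⟨hb, k1, k2, k3, k4⟩ := h
  have h3 : p ^ 3 = 2 * p + 1 := by linear_combination (p + 1) * hp
  by_cases hA : 0 ≤ (p + 1) * a + (2 - p) * b - c
  · refine ⟨((p + 1) * a + (2 - p) * b - c) / 2, (-p * a + b + (p - 1) * c) / 2, 0, 0,
      (-a - (p - 1) * b + p * c) / 2, by linarith, by linarith, le_rfl, le_rfl, by linarith,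
      ?_, ?_, ?_⟩ <;> ring_nf <;> simp only [hp] <;> ring
  by_cases hB : 0 ≤ -(p + 1) * a + (2 - p) * b - c
  · refine ⟨0, (p * a + b + (p - 1) * c) / 2, (-(p + 1) * a + (2 - p) * b - c) / 2,
      (a - (p - 1) * b + p * c) / 2, 0, le_rfl, by linarith, by linarith, by linarith, le_rfl,
      ?_, ?_, ?_⟩ <;> ring_nf <;> simp only [hp] <;> ring
  · push Not at hA hB
    refine ⟨0, (p - 1) * b, 0, (p - 1) * (-(p + 1) * a + c - (2 - p) * b) / 2,
      (p - 1) * ((p + 1) * a + c - (2 - p) * b) / 2, le_rfl,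
      mul_nonneg (by linarith) hb, le_rfl,
      div_nonneg (mul_nonneg (by linarith) (by linarith)) (by norm_num),
      div_nonneg (mul_nonneg (by linarith) (by linarith)) (by norm_num),
      ?_, ?_, ?_⟩ <;> ring_nf <;> simp only [hp, h3] <;> ring

lemma dod_norm {p a b c t1 t2 t3 t4 t5 : ℝ} (hp : p ^ 2 = p + 1)
    (h : DodT p a b c t1 t2 t3 t4 t5) :
    a ^ 2 + b ^ 2 + c ^ 2 = 3 * (t1 + t2 + t3 + t4 + t5) ^ 2
      - 2 * (4 - 2 * p) * (t1 * t2 + t2 * t3 + t3 * t4 + t4 * t5 + t5 * t1)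
      - 4 * (t1 * t3 + t2 * t4 + t3 * t5 + t4 * t1 + t5 * t2) := by
  obtain ⟨-, -, -, -, -, rfl, rfl, rfl⟩ := h
  ring_nf; simp only [hp]; ring

lemma dod_inner {p a b c t1 t2 t3 t4 t5 x y z u1 u2 u3 u4 u5 : ℝ} (hp : p ^ 2 = p + 1)
    (h : DodT p a b c t1 t2 t3 t4 t5) (h' : DodT p x y z u1 u2 u3 u4 u5) :
    a * x + b * y + c * z = (t1 + t2 + t3 + t4 + t5) * (u1 + u2 + u3 + u4 + u5)
      + 2 * (t1 * u1 + t2 * u2 + t3 * u3 + t4 * u4 + t5 * u5)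
      + (2 * p - 2) * (t1 * u2 + t2 * u1 + t2 * u3 + t3 * u2 + t3 * u4 + t4 * u3
        + t4 * u5 + t5 * u4 + t5 * u1 + t1 * u5) := by
  obtain ⟨-, -, -, -, -, rfl, rfl, rfl⟩ := h
  obtain ⟨-, -, -, -, -, rfl, rfl, rfl⟩ := h'
  ring_nf; simp only [hp]; ring

/-- A point of norm exactly `√3 T` lies on an allowed ray. -/
lemma dod_extreme {p a b c t1 t2 t3 t4 t5 : ℝ} (hp : p ^ 2 = p + 1) (h2 : p < 2)
    (h : DodT p a b c t1 t2 t3 t4 t5) (hb : ¬ DodBad p a b c) 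
    (hs : 3 * (t1 + t2 + t3 + t4 + t5) ^ 2 ≤ a ^ 2 + b ^ 2 + c ^ 2) :
    t3 = 0 ∧ t4 = 0 ∧ t5 = 0 := by
  have hn := dod_norm hp h
  obtain ⟨n1, n2, n3, n4, n5, ha, hb', hc⟩ := h
  set P := t1 * t2 + t2 * t3 + t3 * t4 + t4 * t5 + t5 * t1 with hP
  set Q := t1 * t3 + t2 * t4 + t3 * t5 + t4 * t1 + t5 * t2 with hQ
  have m12 := mul_nonneg n1 n2
  have m13 := mul_nonneg n1 n3
  have m14 := mul_nonneg n4 n1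
  have m15 := mul_nonneg n5 n1
  have m23 := mul_nonneg n2 n3
  have m24 := mul_nonneg n2 n4
  have m25 := mul_nonneg n5 n2
  have m34 := mul_nonneg n3 n4
  have m35 := mul_nonneg n3 n5
  have m45 := mul_nonneg n4 n5
  have hP0 : 0 ≤ P := by linarith
  have hQ0 : 0 ≤ Q := by linarith
  have hPm : 0 ≤ (4 - 2 * p) * P := mul_nonneg (by linarith) hP0
  have hQz : Q = 0 := by linarith
  have hPz : P = 0 := by
    have : (4 - 2 * p) * P = 0 := by linarith
    rcases mul_eq_zero.1 this with h | h
    · linarith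
    · exact h
  have e13 : t1 * t3 = 0 := by linarith
  have e14 : t4 * t1 = 0 := by linarith
  have e15 : t5 * t1 = 0 := by linarith
  have e23 : t2 * t3 = 0 := by linarith
  have e24 : t2 * t4 = 0 := by linarith
  have e25 : t5 * t2 = 0 := by linarith
  have e34 : t3 * t4 = 0 := by linarith
  have e35 : t3 * t5 = 0 := by linarith
  have e45 : t4 * t5 = 0 := by linarith
  by_cases z1 : t1 = 0
  · by_cases z2 : t2 = 0
    · exfalso
      apply hb
      subst z1 z2
      by_cases z3 : t3 = 0
      · subst z3
        rcases mul_eq_zero.1 e45 with z | z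
        · subst z
          right; left
          refine ⟨by rw [hb']; ring, ?_⟩
          rw [hc, ha]; linear_combination (-t5) * hp
        · subst z
          right; right
          refine ⟨by rw [hb']; ring, ?_⟩
          rw [hc, ha]; linear_combination (-t4) * hp
      · have z4 : t4 = 0 := by simpa [z3] using e34
        have z5 : t5 = 0 := by simpa [z3] using e35
        left
        rw [hb', hc, ha, z4, z5]
        constructor <;> ring
    · simp_all
  · simp_all

lemma dod_face {p a b c x y z s : ℝ} (hp : p ^ 2 = p + 1) (h1 : 1 < p) (h2 : p < 2)
    (h : DodG p a b c) (h' : DodG p x y z) (hs : 0 < s)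
    (e : a ^ 2 + b ^ 2 + c ^ 2 = s) (e' : x ^ 2 + y ^ 2 + z ^ 2 = s) :
    s < 3 * (a * x + b * y + c * z) := by
  obtain ⟨t1, t2, t3, t4, t5, ht⟩ := dod_decomp hp h1 h.1
  obtain ⟨u1, u2, u3, u4, u5, hu⟩ := dod_decomp hp h1 h'.1
  have key : ∀ {a b c t1 t2 t3 t4 t5 : ℝ}, DodT p a b c t1 t2 t3 t4 t5 →
      a ^ 2 + b ^ 2 + c ^ 2 ≤ 3 * (t1 + t2 + t3 + t4 + t5) ^ 2 := by
    intro a b c t1 t2 t3 t4 t5 h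
    rw [dod_norm hp h]
    obtain ⟨n1, n2, n3, n4, n5, -⟩ := h
    have : 0 ≤ 4 - 2 * p := by linarith
    have A : 0 ≤ 2 * (4 - 2 * p) * (t1 * t2 + t2 * t3 + t3 * t4 + t4 * t5 + t5 * t1) := by
      positivity
    have B : 0 ≤ 4 * (t1 * t3 + t2 * t4 + t3 * t5 + t4 * t1 + t5 * t2) := by positivity
    linarith
  have kt := key ht
  have ku := key hu
  have hi := dod_inner hp ht hu
  have ex := dod_extreme hp h2 ht h.2
  have ex' := dod_extreme hp h2 hu h'.2
  obtain ⟨n1, n2, n3, n4, n5, -⟩ := ht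
  obtain ⟨m1, m2, m3, m4, m5, -⟩ := hu
  rw [e] at kt ex
  rw [e'] at ku ex'
  have hq : 0 < 2 * p - 2 := by linarith
  have hT0 : 0 ≤ t1 + t2 + t3 + t4 + t5 := by positivity
  have hU0 : 0 ≤ u1 + u2 + u3 + u4 + u5 := by positivity
  have hX : 0 ≤ 2 * (t1 * u1 + t2 * u2 + t3 * u3 + t4 * u4 + t5 * u5)
      + (2 * p - 2) * (t1 * u2 + t2 * u1 + t2 * u3 + t3 * u2 + t3 * u4 + t4 * u3
        + t4 * u5 + t5 * u4 + t5 * u1 + t1 * u5) := by positivity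
  set T := t1 + t2 + t3 + t4 + t5 with hT
  set U := u1 + u2 + u3 + u4 + u5 with hU
  have hTU : 0 ≤ T * U := mul_nonneg hT0 hU0
  by_cases cT : 3 * T ^ 2 ≤ s
  · by_cases cU : 3 * U ^ 2 ≤ s
    · obtain ⟨z3, z4, z5⟩ := ex cT
      obtain ⟨w3, w4, w5⟩ := ex' cU
      have hsq : T ^ 2 = U ^ 2 := by linarith
      have hTe : T = U := by
        rwa [sq_eq_sq₀ hT0 hU0] at hsq
      have hTpos : 0 < T := by
        rcases hT0.lt_or_eq with h | h
        · exact h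
        · rw [← h] at kt; norm_num at kt; linarith
      have hTU' : T * U = T ^ 2 := by rw [← hTe]; ring
      subst z3 z4 z5 w3 w4 w5
      have hYpos : (0:ℝ) < 2 * (t1 * u1 + t2 * u2) + (2 * p - 2) * (t1 * u2 + t2 * u1) := by
        have : 0 < (2 * p - 2) * (T * U) := by rw [hTU']; positivity
        have h5 : 0 ≤ (4 - 2 * p) * (t1 * u1 + t2 * u2) :=
          mul_nonneg (by linarith) (by positivity)
        rw [hT, hU] at this
        linarith
      linarith
    · push Not at cU
      have : s * s < (3 * (T * U)) * (3 * (T * U)) := by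
        have : (3 * (T * U)) * (3 * (T * U)) = (3 * T ^ 2) * (3 * U ^ 2) := by ring
        rw [this]
        exact mul_lt_mul' kt cU hs.le (by linarith)
      have := lt_of_mul_self_lt_mul_self₀ (by linarith) this
      linarith
  · push Not at cT
    have : s * s < (3 * (T * U)) * (3 * (T * U)) := by
      have : (3 * (T * U)) * (3 * (T * U)) = (3 * T ^ 2) * (3 * U ^ 2) := by ring
      rw [this]
      exact mul_lt_mul cT ku hs (by linarith)
    have := lt_of_mul_self_lt_mul_self₀ (by linarith) this
    linarith

lemma dod_class {p a b c x y z s : ℝ} (hp : p ^ 2 = p + 1) (h1 : 1 < p) (h2 : p < 2)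
    (h : DodC p a b c) (h' : DodC p x y z) (hs : 0 < s)
    (e : a ^ 2 + b ^ 2 + c ^ 2 = s) (e' : x ^ 2 + y ^ 2 + z ^ 2 = s) :
    s < |3 * (a * x + b * y + c * z)| := by
  rw [lt_abs]
  rcases h with h | h <;> rcases h' with h' | h'
  · left; exact dod_face hp h1 h2 h h' hs e e'
  · right; linarith [dod_face hp h1 h2 h h' hs e (by linarith)]
  · right; linarith [dod_face hp h1 h2 h h' hs (by linarith) e']
  · left; linarith [dod_face hp h1 h2 h h' hs (by linarith) (by linarith)]

lemma DodC.neg {p a b c : ℝ} (h : DodC p a b c) : DodC p (-a) (-b) (-c) := by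
  rcases h with h | h
  · right; simpa using h
  · left; exact h

lemma DodS.cyc {p a b c : ℝ} (h : DodS p a b c) : DodS p b c a := by
  unfold DodS at *; tauto

lemma DodS.neg {p a b c : ℝ} (h : DodS p a b c) : DodS p (-a) (-b) (-c) := by
  unfold DodS at *
  rcases h with h | h | h | h | h | h <;> have := h.neg <;> tauto

lemma DodS.of_neg {p a b c : ℝ} (h : DodS p (-a) (-b) (-c)) : DodS p a b c := by
  simpa using h.neg

/-- The ray of the vertex `(1,1,1)` is allowed. -/
lemma dod_g1 {p m : ℝ} (h1 : 1 < p) (hm : 0 < m) : DodG p m m m := by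
  have := mul_pos (sub_pos.2 h1) hm
  refine ⟨⟨hm.le, by linarith, by linarith, by linarith, by linarith⟩, ?_⟩
  rintro (⟨-, h⟩ | ⟨h, -⟩ | ⟨h, -⟩) <;> linarith

/-- The ray of the vertex `(0,p,p-1)` is allowed. -/
lemma dod_g2 {p m : ℝ} (hp : p ^ 2 = p + 1) (h1 : 1 < p) (hm : 0 < m) :
    DodG p 0 (p * m) ((p - 1) * m) := by
  have h3 := mul_pos (sub_pos.2 h1) hm
  have h4 : p * (p * m) = p * m + m := by linear_combination m * hp
  have h5 : p * ((p - 1) * m) = m := by linear_combination m * hp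
  refine ⟨⟨by nlinarith, by linarith, by linarith, by linarith, by linarith⟩, ?_⟩
  rintro (⟨-, h⟩ | ⟨h, -⟩ | ⟨h, -⟩) <;> nlinarith

/-- All vertices `(±1,±1,±1)` are covered. -/
lemma dod_v1 {p m : ℝ} (h1 : 1 < p) (hm : 0 < m) :
    DodS p m m m ∧ DodS p m (-m) m := by
  have := dod_g1 h1 hm
  constructor
  · left; left; exact this
  · right; right; right; left; left; simpa using this

lemma dod_v2 {p m : ℝ} (hp : p ^ 2 = p + 1) (h1 : 1 < p) (hm : 0 < m) :
    DodS p 0 (p * m) ((p - 1) * m) ∧ DodS p 0 (-(p * m)) ((p - 1) * m) := by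
  have := dod_g2 hp h1 hm
  constructor
  · left; left; exact this
  · right; right; right; left; left; simpa using this

lemma dod_bad {p a b c : ℝ} (hp : p ^ 2 = p + 1) (h1 : 1 < p)
    (h0 : ¬ (a = 0 ∧ b = 0 ∧ c = 0)) (h : DodK p a b c) (hb : DodBad p a b c) :
    DodS p a b c ∧ DodS p a (-b) c := by
  obtain ⟨k0, k1, k2, k3, k4⟩ := h
  rcases hb with ⟨rfl, rfl⟩ | ⟨rfl, rfl⟩ | ⟨rfl, rfl⟩
  · have hm : 0 < b := by
      rcases k0.lt_or_eq with h | h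
      · exact h
      · exact absurd (by simp [← h]) h0
    obtain ⟨A, B⟩ := dod_v1 h1 hm
    constructor
    · exact B.cyc.cyc.cyc.cyc
    · apply DodS.of_neg; simpa using B.cyc.cyc
  · have hm : 0 < a := by
      rcases lt_trichotomy a 0 with h | h | h
      · nlinarith
      · exact absurd (by simp [h]) h0
      · exact h
    have hpa : 0 < p * a := by positivity
    obtain ⟨A, B⟩ := dod_v2 hp h1 hpa
    have e1 : p * (p * a) = (p + 1) * a := by linear_combination a * hp
    have e2 : (p - 1) * (p * a) = a := by linear_combination a * hp
    rw [e1, e2] at A B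
    have := A.cyc.cyc
    simp only [neg_zero]
    exact ⟨this, this⟩
  · have hm : 0 < -a := by
      rcases lt_trichotomy a 0 with h | h | h
      · linarith
      · exact absurd (by simp [h]) h0
      · nlinarith
    have hpa : 0 < p * (-a) := by positivity
    obtain ⟨A, B⟩ := dod_v2 hp h1 hpa
    have e1 : p * (p * (-a)) = (p + 1) * (-a) := by linear_combination (-a) * hp
    have e2 : (p - 1) * (p * (-a)) = -a := by linear_combination (-a) * hp
    rw [e1, e2] at A B
    have := B.cyc.cyc.neg
    simp only [neg_zero, neg_neg, mul_neg] at this ⊢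
    exact ⟨this, this⟩

lemma dod_K_S {p a b c : ℝ} (hp : p ^ 2 = p + 1) (h1 : 1 < p)
    (h0 : ¬ (a = 0 ∧ b = 0 ∧ c = 0)) (h : DodK p a b c) :
    DodS p a b c ∧ DodS p a (-b) c := by
  by_cases hb : DodBad p a b c
  · exact dod_bad hp h1 h0 h hb
  · constructor
    · left; left; exact ⟨h, hb⟩
    · right; right; right; left; left; simpa using ⟨h, hb⟩

/-- The face with normal `±(0,1,p)` or, by reflection, `±(0,-1,p)`. -/
lemma dod_max {p a b c : ℝ} (hp : p ^ 2 = p + 1) (h1 : 1 < p)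
    (h0 : ¬ (a = 0 ∧ b = 0 ∧ c = 0))
    (k0 : |-b + p * c| ≤ |b + p * c|) (k1 : |a + p * b| ≤ |b + p * c|)
    (k2 : |-a + p * b| ≤ |b + p * c|) (k3 : |c + p * a| ≤ |b + p * c|)
    (k4 : |-c + p * a| ≤ |b + p * c|) :
    DodS p a b c ∧ DodS p a (-b) c := by
  rcases le_total 0 (b + p * c) with h | h
  · rw [abs_of_nonneg h, abs_le] at k0 k1 k2 k3 k4
    exact dod_K_S hp h1 h0
      ⟨by linarith [k0.2], by linarith [k1.2], by linarith [k2.2],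
        by linarith [k3.2], by linarith [k4.1]⟩
  · rw [abs_of_nonpos h, abs_le] at k0 k1 k2 k3 k4
    have := dod_K_S (p := p) (a := -a) (b := -b) (c := -c) hp h1 (by simpa using h0)
      ⟨by linarith [k0.1], by linarith [k1.1], by linarith [k2.1],
        by linarith [k3.1], by linarith [k4.2]⟩
    exact ⟨this.1.of_neg, this.2.of_neg⟩

lemma dod_cover {p x y z : ℝ} (hp : p ^ 2 = p + 1) (h1 : 1 < p)
    (h0 : ¬ (x = 0 ∧ y = 0 ∧ z = 0)) : DodS p x y z := by
  obtain ⟨i, hi⟩ := Finite.exists_max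
    (![|y + p * z|, |-y + p * z|, |z + p * x|, |-z + p * x|, |x + p * y|, |-x + p * y|] :
      Fin 6 → ℝ)
  have i0 := hi 0
  have i1 := hi 1
  have i2 := hi 2
  have i3 := hi 3
  have i4 := hi 4
  have i5 := hi 5
  have sw : ∀ u v : ℝ, |u + p * -v| = |-u + p * v| := by
    intro u v; rw [← abs_neg]; congr 1; ring
  have sw' : ∀ u v : ℝ, |-u + p * -v| = |u + p * v| := by
    intro u v; rw [← abs_neg]; congr 1; ring
  clear hi
  fin_cases i <;> simp at i0 i1 i2 i3 i4 i5
  · exact (dod_max hp h1 h0 i1 i4 i5 i2 i3).1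
  · simpa using (dod_max (a := x) (b := -y) (c := z) hp h1 (by simpa using h0)
      (by simpa using i0) (by rw [sw]; exact i5) (by rw [sw']; exact i4) i2 i3).2
  · exact (dod_max (a := y) (b := z) (c := x) hp h1 (by tauto) i3 i0 i1 i4 i5).1.cyc.cyc
  · have := (dod_max (a := y) (b := -z) (c := x) hp h1 (by simp; tauto)
      (by simpa using i2) (by rw [sw]; exact i1) (by rw [sw']; exact i0) i4 i5).2.cyc.cyc
    simpa using this
  · exact (dod_max (a := z) (b := x) (c := y) hp h1 (by tauto) i5 i2 i3 i0 i1).1.cyc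
  · have := (dod_max (a := z) (b := -x) (c := y) hp h1 (by simp; tauto)
      (by simpa using i4) (by rw [sw]; exact i3) (by rw [sw']; exact i2) i0 i1).2.cyc
    simpa using this

def DodP (p x y z : ℝ) (i : Fin 6) : Prop :=
  (![DodC p x y z, DodC p y z x, DodC p z x y,
    DodC p x (-y) z, DodC p y (-z) x, DodC p z (-x) y] : Fin 6 → Prop) i

lemma dod_P_exists {p x y z : ℝ} (h : DodS p x y z) : ∃ i, DodP p x y z i := by
  rcases h with h | h | h | h | h | h
  exacts [⟨0, h⟩, ⟨1, h⟩, ⟨2, h⟩, ⟨3, h⟩, ⟨4, h⟩, ⟨5, h⟩]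

lemma dod_P_sep {p a b c x y z s : ℝ} (hp : p ^ 2 = p + 1) (h1 : 1 < p) (h2 : p < 2)
    {i : Fin 6} (h : DodP p a b c i) (h' : DodP p x y z i) (hs : 0 < s)
    (e : a ^ 2 + b ^ 2 + c ^ 2 = s) (e' : x ^ 2 + y ^ 2 + z ^ 2 = s) :
    s < |3 * (a * x + b * y + c * z)| := by
  fin_cases i <;> simp [DodP] at h h' <;>
    have := dod_class hp h1 h2 h h' hs (by linarith) (by linarith) <;>
    convert this using 2 <;> ring

theorem sphere_six_coloring_dodecahedron :
    ∀ r : ℝ, Real.sqrt (3 / 8) ≤ r → r ≤ Real.sqrt 3 / 2 →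
      ∃ f : {x : EuclideanSpace ℝ (Fin 3) // ‖x‖ = r} → Fin 6,
        ∀ x y : {x : EuclideanSpace ℝ (Fin 3) // ‖x‖ = r},
          ‖(x : EuclideanSpace ℝ (Fin 3)) - (y : EuclideanSpace ℝ (Fin 3))‖ = 1 →
            f x ≠ f y := by
  intro r hr1 hr2
  have hp : Real.goldenRatio ^ 2 = Real.goldenRatio + 1 := Real.goldenRatio_sq
  have h1 := Real.one_lt_goldenRatio
  have h2 := Real.goldenRatio_lt_two
  set p := Real.goldenRatio
  have hr0 : 0 < r := lt_of_lt_of_le (by positivity) hr1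
  have hl : 3 / 8 ≤ r ^ 2 := (Real.sqrt_le_left hr0.le).1 hr1
  have hu : r ^ 2 ≤ 3 / 4 := by
    calc r ^ 2 ≤ (Real.sqrt 3 / 2) ^ 2 := by gcongr
      _ = 3 / 4 := by rw [div_pow, Real.sq_sqrt (by norm_num)]; norm_num
  have nsq : ∀ v : EuclideanSpace ℝ (Fin 3), ‖v‖ ^ 2 = v 0 ^ 2 + v 1 ^ 2 + v 2 ^ 2 := by
    intro v
    rw [EuclideanSpace.norm_sq_eq]
    simp [Fin.sum_univ_three]
  have hex : ∀ x : {x : EuclideanSpace ℝ (Fin 3) // ‖x‖ = r},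
      ∃ i, DodP p (x.1 0) (x.1 1) (x.1 2) i := by
    intro x
    apply dod_P_exists
    apply dod_cover hp h1
    rintro ⟨e0, e1, e2⟩
    have := nsq x.1
    rw [x.2, e0, e1, e2] at this
    norm_num at this
    linarith
  choose f hf using hex
  refine ⟨f, fun x y hxy hfe => ?_⟩
  have ex := nsq x.1
  have ey := nsq y.1
  have exy := nsq (x.1 - y.1)
  rw [x.2] at ex
  rw [y.2] at ey
  rw [hxy] at exy
  simp only [PiLp.sub_apply] at exy
  have hy := hf y
  rw [← hfe] at hy
  have := dod_P_sep hp h1 h2 (hf x) hy (by positivity) ex.symm ey.symm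
  have hin : 3 * (x.1 0 * y.1 0 + x.1 1 * y.1 1 + x.1 2 * y.1 2) = 3 * (r ^ 2 - 1 / 2) := by
    linarith
  rw [hin, lt_abs] at this
  rcases this with h | h <;> linarith
end

section
/- For every radius r with √(1/3) < r ≤ √3/2, there is a coloring of the sphere of radius r in ℝ³ with 6 colors avoiding unit distance; that is, a function f from {x ∈ ℝ³ : ‖x‖ = r} to a 6-element set such that f(x) ≠ f(y) whenever ‖x − y‖ = 1 (using the cube projection for √(1/3) < r ≤ √(3/8) and the dodecahedron projection for √(3/8) ≤ r ≤ √3/2). -/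
/-- Points of the closed face cone of the dodecahedron with normal `(0, 1, p)` (`p` golden ratio),
written as nonnegative combinations of its five vertices. -/
lemma face_decomp (p u v w : ℝ) (hp : p ^ 2 = p + 1) (hp1 : 1 < p) (hp2 : p < 2)
    (h1 : p * w - v ≤ v + p * w)
    (h2 : p * u + w ≤ v + p * w) (h3 : -(p * u) + w ≤ v + p * w)
    (h4 : u + p * v ≤ v + p * w) (h5 : -u + p * v ≤ v + p * w) :
    ∃ a b c d e : ℝ, 0 ≤ a ∧ 0 ≤ b ∧ 0 ≤ c ∧ 0 ≤ d ∧ 0 ≤ e ∧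
      u = b + (p - 1) * (c - d) - e ∧ v = p * a + b + e ∧
      w = (p - 1) * a + b + e + p * (c + d) := by
  by_cases hB : 0 ≤ (p + 1) * u + (2 - p) * v - w
  · refine ⟨(v + p * w - p * u - w) / 2, ((p + 1) * u + (2 - p) * v - w) / 2,
      (v + p * w - u - p * v) / 2, 0, 0, by linarith, by linarith, by linarith, le_rfl, le_rfl,
      ?_, ?_, ?_⟩ <;> grind
  by_cases hE : 0 ≤ -((p + 1) * u) + (2 - p) * v - w
  · refine ⟨(v + p * w + p * u - w) / 2, 0, 0, (v + p * w + u - p * v) / 2,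
      (-((p + 1) * u) + (2 - p) * v - w) / 2, by linarith, le_rfl, le_rfl, by linarith,
      by linarith, ?_, ?_, ?_⟩ <;> grind
  have hv : 0 ≤ v := by linarith
  refine ⟨(p - 1) * v, 0, (p - 1) * (w - (2 - p) * v + (p + 1) * u) / 2,
    (p - 1) * (w - (2 - p) * v - (p + 1) * u) / 2, 0,
    mul_nonneg (by linarith) hv, le_rfl,
    div_nonneg (mul_nonneg (by linarith) (by linarith)) (by norm_num),
    div_nonneg (mul_nonneg (by linarith) (by linarith)) (by norm_num), le_rfl, ?_, ?_, ?_⟩ <;> grind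

/-- Membership in the colour class (in face coordinates). -/
def FaceClass (p u v w : ℝ) : Prop :=
  (|p * w - v| ≤ |v + p * w| ∧ |p * u + w| ≤ |v + p * w| ∧ |-(p * u) + w| ≤ |v + p * w| ∧
    |u + p * v| ≤ |v + p * w| ∧ |-u + p * v| ≤ |v + p * w|) ∧
  ¬ (v = 0 ∧ w = (p + 1) * u) ∧ ¬ (v = 0 ∧ w = -((p + 1) * u)) ∧ ¬ (v = w ∧ u = -w)

lemma FaceClass.neg {p u v w : ℝ} (h : FaceClass p u v w) : FaceClass p (-u) (-v) (-w) := by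
  obtain ⟨⟨h1, h2, h3, h4, h5⟩, h6, h7, h8⟩ := h
  refine ⟨⟨?_, ?_, ?_, ?_, ?_⟩, ?_, ?_, ?_⟩
  · rw [← abs_neg (p * -w - -v), ← abs_neg (-v + p * -w)]; convert h1 using 2 <;> ring
  · rw [← abs_neg (p * -u + -w), ← abs_neg (-v + p * -w)]; convert h2 using 2 <;> ring
  · rw [← abs_neg (-(p * -u) + -w), ← abs_neg (-v + p * -w)]; convert h3 using 2 <;> ring
  · rw [← abs_neg (-u + p * -v), ← abs_neg (-v + p * -w)]; convert h4 using 2 <;> ring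
  · rw [← abs_neg (- -u + p * -v), ← abs_neg (-v + p * -w)]; convert h5 using 2 <;> ring
  · rintro ⟨h, h'⟩; exact h6 ⟨by linarith, by linarith⟩
  · rintro ⟨h, h'⟩; exact h7 ⟨by linarith, by linarith⟩
  · rintro ⟨h, h'⟩; exact h8 ⟨by linarith, by linarith⟩

/-- Data extracted from a point of a colour class on the positive side. -/
lemma FaceClass.decomp {p u v w : ℝ} (hp : p ^ 2 = p + 1) (hp1 : 1 < p) (hp2 : p < 2)
    (h : FaceClass p u v w) (hL : 0 ≤ v + p * w) :
    ∃ a b c d e : ℝ, 0 ≤ a ∧ 0 ≤ b ∧ 0 ≤ c ∧ 0 ≤ d ∧ 0 ≤ e ∧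
      u = b + (p - 1) * (c - d) - e ∧ v = p * a + b + e ∧
      w = (p - 1) * a + b + e + p * (c + d) ∧
      (a * b + b * c + c * d + d * e + e * a + a * c + a * d + b * d + b * e + c * e = 0 →
        c = 0 ∧ d = 0 ∧ e = 0 ∧ 0 < a + b) := by
  obtain ⟨⟨h1, h2, h3, h4, h5⟩, h6, h7, h8⟩ := h
  rw [abs_of_nonneg hL] at h1 h2 h3 h4 h5
  obtain ⟨a, b, c, d, e, ha, hb, hc, hd, he, hu, hv, hw⟩ := face_decomp p u v w hp hp1 hp2
    ((le_abs_self _).trans h1) ((le_abs_self _).trans h2) ((le_abs_self _).trans h3)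
    ((le_abs_self _).trans h4) ((le_abs_self _).trans h5)
  refine ⟨a, b, c, d, e, ha, hb, hc, hd, he, hu, hv, hw, fun h0 => ?_⟩
  have hab := mul_nonneg ha hb
  have hbc := mul_nonneg hb hc
  have hcd := mul_nonneg hc hd
  have hde := mul_nonneg hd he
  have hea := mul_nonneg he ha
  have hac := mul_nonneg ha hc
  have had := mul_nonneg ha hd
  have hbd := mul_nonneg hb hd
  have hbe := mul_nonneg hb he
  have hce := mul_nonneg hc he
  have c0 : c = 0 := by
    by_contra hne
    have a0 : a = 0 := (mul_eq_zero.1 (show a * c = 0 by linarith)).resolve_right hne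
    have b0 : b = 0 := (mul_eq_zero.1 (show b * c = 0 by linarith)).resolve_right hne
    have d0 : d = 0 := (mul_eq_zero.1 (show c * d = 0 by linarith)).resolve_left hne
    have e0 : e = 0 := (mul_eq_zero.1 (show c * e = 0 by linarith)).resolve_left hne
    subst a0 b0 d0 e0
    exact h6 ⟨by rw [hv]; ring, by rw [hw, hu]; linear_combination (-c) * hp⟩
  have d0 : d = 0 := by
    by_contra hne
    have a0 : a = 0 := (mul_eq_zero.1 (show a * d = 0 by linarith)).resolve_right hne
    have b0 : b = 0 := (mul_eq_zero.1 (show b * d = 0 by linarith)).resolve_right hne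
    have e0 : e = 0 := (mul_eq_zero.1 (show d * e = 0 by linarith)).resolve_left hne
    subst a0 b0 c0 e0
    exact h7 ⟨by rw [hv]; ring, by rw [hw, hu]; linear_combination (-d) * hp⟩
  have e0 : e = 0 := by
    by_contra hne
    have a0 : a = 0 := (mul_eq_zero.1 (show e * a = 0 by linarith)).resolve_left hne
    have b0 : b = 0 := (mul_eq_zero.1 (show b * e = 0 by linarith)).resolve_right hne
    subst a0 b0 c0 d0
    exact h8 ⟨by rw [hv, hw]; ring, by rw [hw, hu]; ring⟩
  refine ⟨c0, d0, e0, ?_⟩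
  by_contra hn
  have a0 : a = 0 := by linarith
  have b0 : b = 0 := by linarith
  subst a0 b0 c0 d0 e0
  exact h6 ⟨by rw [hv]; ring, by rw [hw, hu]; ring⟩

/-- Squared length of a nonnegative combination of the vertices. -/
lemma normsq_comb (p a b c d e u v w : ℝ) (hp : p ^ 2 = p + 1)
    (hu : u = b + (p - 1) * (c - d) - e) (hv : v = p * a + b + e)
    (hw : w = (p - 1) * a + b + e + p * (c + d)) :
    u ^ 2 + v ^ 2 + w ^ 2 = 3 * (a + b + c + d + e) ^ 2
      - (8 - 4 * p) * (a * b + b * c + c * d + d * e + e * a)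
      - 4 * (a * c + a * d + b * d + b * e + c * e) := by
  subst hu hv hw
  grind

lemma inner_comb (p a b c d e u v w a' b' c' d' e' u' v' w' : ℝ) (hp : p ^ 2 = p + 1)
    (hu : u = b + (p - 1) * (c - d) - e) (hv : v = p * a + b + e)
    (hw : w = (p - 1) * a + b + e + p * (c + d))
    (hu' : u' = b' + (p - 1) * (c' - d') - e') (hv' : v' = p * a' + b' + e')
    (hw' : w' = (p - 1) * a' + b' + e' + p * (c' + d')) :
    u * u' + v * v' + w * w' = (a + b + c + d + e) * (a' + b' + c' + d' + e')
      + 2 * (a * a' + b * b' + c * c' + d * d' + e * e')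
      + (2 * p - 2) * (a * b' + b * a' + b * c' + c * b' + c * d' + d * c' + d * e' + e * d'
        + e * a' + a * e') := by
  subst hu hv hw hu' hv' hw'
  grind

lemma aux_pos {p a b c d e a' b' c' d' e' : ℝ} (hp1 : 1 < p)
    (ha : 0 ≤ a) (hb : 0 ≤ b) (hc : 0 ≤ c) (hd : 0 ≤ d) (he : 0 ≤ e)
    (ha' : 0 ≤ a') (hb' : 0 ≤ b') (hc' : 0 ≤ c') (hd' : 0 ≤ d') (he' : 0 ≤ e')
    (hab : 0 < a + b) (hab' : 0 < a' + b') :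
    0 < 2 * (a * a' + b * b' + c * c' + d * d' + e * e') + (2 * p - 2) *
      (a * b' + b * a' + b * c' + c * b' + c * d' + d * c' + d * e' + e * d'
        + e * a' + a * e') := by
  have hp0 : 0 < 2 * p - 2 := by linarith
  rcases ha.lt_or_eq with h1 | h1
  · rcases ha'.lt_or_eq with h2 | h2
    · positivity
    · have h3 : 0 < b' := by linarith
      positivity
  · have h4 : 0 < b := by linarith
    rcases ha'.lt_or_eq with h2 | h2
    · positivity
    · have h3 : 0 < b' := by linarith
      positivity

lemma aux_final {S T q q' m : ℝ} (hS : 0 < S) (hT : 0 < T) (hq : 0 ≤ q) (hq' : 0 ≤ q')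
    (hM : 0 ≤ 3 * S ^ 2 - q) (hM' : 0 ≤ 3 * T ^ 2 - q') (hm : 0 ≤ m)
    (hm0 : q = 0 → q' = 0 → 0 < m) :
    (3 * S ^ 2 - q) * (3 * T ^ 2 - q') < 9 * (S * T + m) ^ 2 := by
  have hST : 0 < S * T := mul_pos hS hT
  have hSm := mul_nonneg hST.le hm
  have e1 : 0 ≤ q * (3 * T ^ 2 - q') := mul_nonneg hq hM'
  have e2 : 0 ≤ S ^ 2 * q' := by positivity
  have e1' : 0 ≤ (3 * S ^ 2 - q) * q' := mul_nonneg hM hq'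
  have e2' : 0 ≤ T ^ 2 * q := by positivity
  have e3 := sq_nonneg m
  rcases hq.lt_or_eq with h1 | h1
  · have : 0 < T ^ 2 * q := by positivity
    linarith
  rcases hq'.lt_or_eq with h2 | h2
  · have : 0 < S ^ 2 * q' := by positivity
    linarith
  have := mul_pos hST (hm0 h1.symm h2.symm)
  subst h1 h2
  linarith

lemma face_pos {p u v w u' v' w' : ℝ} (hp : p ^ 2 = p + 1) (hp1 : 1 < p) (hp2 : p < 2)
    (h : FaceClass p u v w) (hL : 0 ≤ v + p * w)
    (h' : FaceClass p u' v' w') (hL' : 0 ≤ v' + p * w') :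
    (u ^ 2 + v ^ 2 + w ^ 2) * (u' ^ 2 + v' ^ 2 + w' ^ 2) <
      9 * (u * u' + v * v' + w * w') ^ 2 := by
  obtain ⟨a, b, c, d, e, ha, hb, hc, hd, he, hu, hv, hw, hz⟩ := h.decomp hp hp1 hp2 hL
  obtain ⟨a', b', c', d', e', ha', hb', hc', hd', he', hu', hv', hw', hz'⟩ :=
    h'.decomp hp hp1 hp2 hL'
  rw [inner_comb p a b c d e u v w a' b' c' d' e' u' v' w' hp hu hv hw hu' hv' hw',
    normsq_comb p a b c d e u v w hp hu hv hw,
    normsq_comb p a' b' c' d' e' u' v' w' hp hu' hv' hw']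
  have hN := normsq_comb p a b c d e u v w hp hu hv hw
  have hN' := normsq_comb p a' b' c' d' e' u' v' w' hp hu' hv' hw'
  have key : ∀ {a b c d e : ℝ}, 0 ≤ a → 0 ≤ b → 0 ≤ c → 0 ≤ d → 0 ≤ e →
      (a * b + b * c + c * d + d * e + e * a + a * c + a * d + b * d + b * e + c * e = 0 →
        c = 0 ∧ d = 0 ∧ e = 0 ∧ 0 < a + b) →
      0 < a + b + c + d + e ∧ ∃ q : ℝ, 0 ≤ q ∧ (8 - 4 * p) *
        (a * b + b * c + c * d + d * e + e * a) + 4 * (a * c + a * d + b * d + b * e + c * e) = q ∧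
      (q = 0 → c = 0 ∧ d = 0 ∧ e = 0 ∧ 0 < a + b) := by
    intro a b c d e ha hb hc hd he hz
    have hP : 0 ≤ a * b + b * c + c * d + d * e + e * a := by positivity
    have hQ : 0 ≤ a * c + a * d + b * d + b * e + c * e := by positivity
    have hP' : 0 ≤ (8 - 4 * p) * (a * b + b * c + c * d + d * e + e * a) :=
      mul_nonneg (by linarith) hP
    refine ⟨?_, _, by linarith, rfl, fun hq => hz ?_⟩
    · by_contra hn
      have a0 : a = 0 := by linarith
      have b0 : b = 0 := by linarith
      have c0 : c = 0 := by linarith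
      have d0 : d = 0 := by linarith
      have e0 : e = 0 := by linarith
      have := (hz (by rw [a0, b0, c0, d0, e0]; ring)).2.2.2
      linarith
    · have h1 : (8 - 4 * p) * (a * b + b * c + c * d + d * e + e * a) = 0 := by linarith
      have h2 := (mul_eq_zero.1 h1).resolve_left (by linarith)
      linarith
  obtain ⟨hS, q, hq, hqe, hq0⟩ := key ha hb hc hd he hz
  obtain ⟨hS', q', hq', hqe', hq0'⟩ := key ha' hb' hc' hd' he' hz'
  have hD : 0 ≤ a * a' + b * b' + c * c' + d * d' + e * e' := by positivity
  have hA : 0 ≤ a * b' + b * a' + b * c' + c * b' + c * d' + d * c' + d * e' + e * d'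
        + e * a' + a * e' := by positivity
  have hA' := mul_nonneg (show 0 ≤ 2 * p - 2 by linarith) hA
  have hM : 0 ≤ 3 * (a + b + c + d + e) ^ 2 - q := by
    have : 0 ≤ u ^ 2 + v ^ 2 + w ^ 2 := by positivity
    linarith
  have hM' : 0 ≤ 3 * (a' + b' + c' + d' + e') ^ 2 - q' := by
    have : 0 ≤ u' ^ 2 + v' ^ 2 + w' ^ 2 := by positivity
    linarith
  rw [sub_sub, sub_sub, hqe, hqe']
  have hex : ∃ m : ℝ, 0 ≤ m ∧ 2 * (a * a' + b * b' + c * c' + d * d' + e * e') + (2 * p - 2) *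
      (a * b' + b * a' + b * c' + c * b' + c * d' + d * c' + d * e' + e * d'
        + e * a' + a * e') = m ∧ (q = 0 → q' = 0 → 0 < m) := by
    refine ⟨_, by linarith, rfl, fun h1 h2 => ?_⟩
    obtain ⟨c0, d0, e0, hab⟩ := hq0 h1
    obtain ⟨c0', d0', e0', hab'⟩ := hq0' h2
    exact aux_pos hp1 ha hb hc hd he ha' hb' hc' hd' he' hab hab'
  obtain ⟨m, hm, hme, hm0⟩ := hex
  rw [add_assoc ((a + b + c + d + e) * (a' + b' + c' + d' + e')), hme]
  generalize a + b + c + d + e = S at *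
  generalize a' + b' + c' + d' + e' = T at *
  exact aux_final hS hS' hq hq' hM hM' hm hm0

/-- Two points of one colour class have `|cos| > 1/3`. -/
lemma face_class_sep {p u v w u' v' w' : ℝ} (hp : p ^ 2 = p + 1) (hp1 : 1 < p) (hp2 : p < 2)
    (h : FaceClass p u v w) (h' : FaceClass p u' v' w') :
    (u ^ 2 + v ^ 2 + w ^ 2) * (u' ^ 2 + v' ^ 2 + w' ^ 2) <
      9 * (u * u' + v * v' + w * w') ^ 2 := by
  rcases le_total 0 (v + p * w) with hL | hL <;> rcases le_total 0 (v' + p * w') with hL' | hL'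
  · exact face_pos hp hp1 hp2 h hL h' hL'
  · have := face_pos hp hp1 hp2 h hL h'.neg (by linarith)
    convert this using 1 <;> ring
  · have := face_pos hp hp1 hp2 h.neg (by linarith) h' hL'
    convert this using 1 <;> ring
  · have := face_pos hp hp1 hp2 h.neg (by linarith) h'.neg (by linarith)
    convert this using 1 <;> ring

/-- The six coordinate changes bringing a face normal to `(0, 1, p)`. -/
def chg (i : Fin 6) (x y z : ℝ) : ℝ × ℝ × ℝ :=
  ![(x, y, z), (x, -y, z), (y, z, x), (y, -z, x), (z, x, y), (z, -x, y)] i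

/-- The six linear forms given by the face normals. -/
def frm (p : ℝ) (i : Fin 6) (x y z : ℝ) : ℝ :=
  ![y + p * z, -y + p * z, z + p * x, -z + p * x, x + p * y, -x + p * y] i

def IsAB (p : ℝ) (t : ℝ × ℝ × ℝ) : Prop :=
  (t.1 = 0 ∧ t.2.1 = (p + 1) * t.2.2) ∨ (t.1 = t.2.2 ∧ t.2.1 = t.2.2)

lemma isAB_class {p u v w : ℝ} (hp : p ^ 2 = p + 1) (hp1 : 1 < p) (hp2 : p < 2)
    (h0 : ¬ (u = 0 ∧ v = 0 ∧ w = 0)) (h : IsAB p (u, v, w)) : FaceClass p u v w := by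
  rcases h with ⟨h1, h2⟩ | ⟨h1, h2⟩
  · simp only at h1 h2
    have hw : w ≠ 0 := by rintro rfl; exact h0 ⟨h1, by rw [h2]; ring, rfl⟩
    subst h1 h2
    refine ⟨⟨?_, ?_, ?_, ?_, ?_⟩, ?_, ?_, ?_⟩
    · rw [← sq_le_sq]; nlinarith [sq_nonneg w]
    · rw [← sq_le_sq]; nlinarith [sq_nonneg w, mul_nonneg (sq_nonneg w) (show 0 ≤ p - 1 by linarith)]
    · rw [← sq_le_sq]; nlinarith [sq_nonneg w, mul_nonneg (sq_nonneg w) (show 0 ≤ p - 1 by linarith)]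
    · apply le_of_eq; congr 1; linear_combination w * hp
    · apply le_of_eq; congr 1; linear_combination w * hp
    · rintro ⟨h, -⟩
      rcases mul_eq_zero.1 h with h | h
      · linarith
      · exact hw h
    · rintro ⟨h, -⟩
      rcases mul_eq_zero.1 h with h | h
      · linarith
      · exact hw h
    · rintro ⟨-, h⟩; exact hw (by linarith)
  · simp only at h1 h2
    have hw : w ≠ 0 := by rintro rfl; exact h0 ⟨h1, h2, rfl⟩
    subst h1 h2
    have : 0 < v ^ 2 := by positivity
    refine ⟨⟨?_, ?_, ?_, ?_, ?_⟩, ?_, ?_, ?_⟩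
    · rw [← sq_le_sq]; nlinarith
    · rw [← sq_le_sq]; nlinarith
    · rw [← sq_le_sq]; nlinarith
    · rw [← sq_le_sq]
    · rw [← sq_le_sq]; nlinarith
    · rintro ⟨h, -⟩; exact hw h
    · rintro ⟨h, -⟩; exact hw h
    · rintro ⟨-, h⟩; exact hw (by linarith)

lemma chg_ne (i : Fin 6) {x y z : ℝ} (h0 : ¬ (x = 0 ∧ y = 0 ∧ z = 0)) :
    ¬ ((chg i x y z).1 = 0 ∧ (chg i x y z).2.1 = 0 ∧ (chg i x y z).2.2 = 0) := by
  fin_cases i <;> simp [chg] at * <;> tauto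

/-- The colour classes cover all directions. -/
lemma dodeca_cover {p : ℝ} (hp : p ^ 2 = p + 1) (hp1 : 1 < p) (hp2 : p < 2) {x y z : ℝ}
    (h0 : ¬ (x = 0 ∧ y = 0 ∧ z = 0)) :
    ∃ i : Fin 6, FaceClass p (chg i x y z).1 (chg i x y z).2.1 (chg i x y z).2.2 := by
  by_cases hAB : ∃ i, IsAB p (chg i x y z)
  · obtain ⟨i, hi⟩ := hAB
    exact ⟨i, isAB_class hp hp1 hp2 (chg_ne i h0) hi⟩
  obtain ⟨i, hi⟩ := Finite.exists_max (fun i => |frm p i x y z|)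
  refine ⟨i, ?_⟩
  have a0 := hi 0
  have a1 := hi 1
  have a2 := hi 2
  have a3 := hi 3
  have a4 := hi 4
  have a5 := hi 5
  push Not at hAB
  have b0 := hAB 0
  have b1 := hAB 1
  have b2 := hAB 2
  have b3 := hAB 3
  have b4 := hAB 4
  have b5 := hAB 5
  clear hi hAB
  simp only [IsAB, chg, frm, Fin.isValue, Matrix.cons_val] at a0 a1 a2 a3 a4 a5 b0 b1 b2 b3 b4 b5
  push Not at b0 b1 b2 b3 b4 b5
  rw [← sq_le_sq] at a0 a1 a2 a3 a4 a5
  fin_cases i <;>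
    simp only [chg, FaceClass, Fin.isValue, Fin.zero_eta, Fin.mk_one, Fin.reduceFinMk,
      Matrix.cons_val, ← sq_le_sq] at a0 a1 a2 a3 a4 a5 ⊢ <;>
    refine ⟨⟨by linarith, by linarith, by linarith, by linarith, by linarith⟩, ?_, ?_, ?_⟩ <;>
    rintro ⟨h, h'⟩ <;>
    first
    | exact b0.1 (by linarith) (by linarith)
    | exact b1.1 (by linarith) (by linarith)
    | exact b2.1 (by linarith) (by linarith)
    | exact b3.1 (by linarith) (by linarith)
    | exact b4.1 (by linarith) (by linarith)
    | exact b5.1 (by linarith) (by linarith)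
    | exact b0.2 (by linarith) (by linarith)
    | exact b1.2 (by linarith) (by linarith)
    | exact b3.2 (by linarith) (by linarith)
    | exact b5.2 (by linarith) (by linarith)

lemma cube_sep {u v w u' v' w' : ℝ} (h1 : |v| ≤ u) (h2 : |w| ≤ u) (h1' : |v'| ≤ u')
    (h2' : |w'| ≤ u') {s : ℝ} (hs : 0 ≤ s) (h : u ^ 2 + v ^ 2 + w ^ 2 = s)
    (h' : u' ^ 2 + v' ^ 2 + w' ^ 2 = s) : -s ≤ 3 * (u * u' + v * v' + w * w') := by
  have hu : 0 ≤ u := (abs_nonneg v).trans h1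
  have e1 : |v * v'| ≤ u * u' := by rw [abs_mul]; gcongr
  have e2 : |w * w'| ≤ u * u' := by rw [abs_mul]; gcongr
  have e3 := (abs_le.1 e1).1
  have e4 := (abs_le.1 e2).1
  nlinarith [sq_nonneg (u - u'), sq_nonneg (v + v'), sq_nonneg (w + w')]

def cubeChg (i : Fin 6) (x y z : ℝ) : ℝ × ℝ × ℝ :=
  ![(x, y, z), (-x, y, z), (y, z, x), (-y, z, x), (z, x, y), (-z, x, y)] i

lemma cube_cover (x y z : ℝ) :
    ∃ i : Fin 6, |(cubeChg i x y z).2.1| ≤ (cubeChg i x y z).1 ∧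
      |(cubeChg i x y z).2.2| ≤ (cubeChg i x y z).1 := by
  have key : ∀ t : ℝ, |t| = t ∨ |t| = -t := abs_choice
  have hc : (|y| ≤ |x| ∧ |z| ≤ |x|) ∨ (|z| ≤ |y| ∧ |x| ≤ |y|) ∨ (|x| ≤ |z| ∧ |y| ≤ |z|) := by
    grind
  rcases hc with ⟨h1, h2⟩ | ⟨h1, h2⟩ | ⟨h1, h2⟩
  · rcases key x with h | h
    · exact ⟨0, by simp only [cubeChg, Fin.isValue, Matrix.cons_val]; constructor <;> linarith⟩
    · exact ⟨1, by simp only [cubeChg, Fin.isValue, Matrix.cons_val]; constructor <;> linarith⟩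
  · rcases key y with h | h
    · exact ⟨2, by simp only [cubeChg, Fin.isValue, Matrix.cons_val]; constructor <;> linarith⟩
    · exact ⟨3, by simp only [cubeChg, Fin.isValue, Matrix.cons_val]; constructor <;> linarith⟩
  · rcases key z with h | h
    · exact ⟨4, by simp only [cubeChg, Fin.isValue, Matrix.cons_val]; constructor <;> linarith⟩
    · exact ⟨5, by simp only [cubeChg, Fin.isValue, Matrix.cons_val]; constructor <;> linarith⟩

theorem sphere_six_coloring_combined :
    ∀ r : ℝ, Real.sqrt (1 / 3) < r → r ≤ Real.sqrt 3 / 2 →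
      ∃ f : {x : EuclideanSpace ℝ (Fin 3) // ‖x‖ = r} → Fin 6,
        ∀ x y : {x : EuclideanSpace ℝ (Fin 3) // ‖x‖ = r},
          ‖(x : EuclideanSpace ℝ (Fin 3)) - (y : EuclideanSpace ℝ (Fin 3))‖ = 1 →
            f x ≠ f y := by
  intro r hr1 hr2
  have hr0 : 0 < r := (Real.sqrt_nonneg _).trans_lt hr1
  have hr3 : r ^ 2 ≤ 3 / 4 := by
    have h3 : Real.sqrt 3 ^ 2 = 3 := Real.sq_sqrt (by norm_num)
    nlinarith
  have hnorm : ∀ x : {x : EuclideanSpace ℝ (Fin 3) // ‖x‖ = r},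
      x.1 0 ^ 2 + x.1 1 ^ 2 + x.1 2 ^ 2 = r ^ 2 := by
    intro x
    have hx : ‖x.1‖ ^ 2 = r ^ 2 := by rw [x.2]
    rw [← hx, EuclideanSpace.real_norm_sq_eq, Fin.sum_univ_three]
  have hdist : ∀ x y : {x : EuclideanSpace ℝ (Fin 3) // ‖x‖ = r}, ‖x.1 - y.1‖ = 1 →
      x.1 0 * y.1 0 + x.1 1 * y.1 1 + x.1 2 * y.1 2 = r ^ 2 - 1 / 2 := by
    intro x y h
    have h1 : ‖x.1 - y.1‖ ^ 2 = 1 := by rw [h]; norm_num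
    rw [EuclideanSpace.real_norm_sq_eq, Fin.sum_univ_three] at h1
    simp only [PiLp.sub_apply] at h1
    linarith [hnorm x, hnorm y]
  rcases lt_or_ge (r ^ 2) (3 / 8) with hlt | hge
  · choose f hf using fun x : {x : EuclideanSpace ℝ (Fin 3) // ‖x‖ = r} =>
      cube_cover (x.1 0) (x.1 1) (x.1 2)
    refine ⟨f, fun x y hxy hfe => ?_⟩
    have hx := hf x
    have hy := hf y
    rw [← hfe] at hy
    have hi := hdist x y hxy
    have hnx := hnorm x
    have hny := hnorm y
    generalize f x = i at hx hy
    have := cube_sep hx.1 hx.2 hy.1 hy.2 (sq_nonneg r)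
      (by rw [← hnx]; fin_cases i <;> simp [cubeChg] <;> ring)
      (by rw [← hny]; fin_cases i <;> simp [cubeChg] <;> ring)
    have e : (cubeChg i (x.1 0) (x.1 1) (x.1 2)).1 * (cubeChg i (y.1 0) (y.1 1) (y.1 2)).1 +
        (cubeChg i (x.1 0) (x.1 1) (x.1 2)).2.1 * (cubeChg i (y.1 0) (y.1 1) (y.1 2)).2.1 +
        (cubeChg i (x.1 0) (x.1 1) (x.1 2)).2.2 * (cubeChg i (y.1 0) (y.1 1) (y.1 2)).2.2 =
        r ^ 2 - 1 / 2 := by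
      rw [← hi]; fin_cases i <;> simp [cubeChg] <;> ring
    rw [e] at this
    linarith
  · have hp : Real.goldenRatio ^ 2 = Real.goldenRatio + 1 := Real.goldenRatio_sq
    have hp1 : 1 < Real.goldenRatio := Real.one_lt_goldenRatio
    have hp2 : Real.goldenRatio < 2 := Real.goldenRatio_lt_two
    have hne : ∀ x : {x : EuclideanSpace ℝ (Fin 3) // ‖x‖ = r},
        ¬ (x.1 0 = 0 ∧ x.1 1 = 0 ∧ x.1 2 = 0) := by
      rintro x ⟨h1, h2, h3⟩
      have := hnorm x
      rw [h1, h2, h3] at this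
      nlinarith
    choose f hf using fun x : {x : EuclideanSpace ℝ (Fin 3) // ‖x‖ = r} =>
      dodeca_cover hp hp1 hp2 (hne x)
    refine ⟨f, fun x y hxy hfe => ?_⟩
    have hx := hf x
    have hy := hf y
    rw [← hfe] at hy
    have hi := hdist x y hxy
    have hnx := hnorm x
    have hny := hnorm y
    generalize f x = i at hx hy
    have := face_class_sep hp hp1 hp2 hx hy
    have e : (chg i (x.1 0) (x.1 1) (x.1 2)).1 * (chg i (y.1 0) (y.1 1) (y.1 2)).1 +
        (chg i (x.1 0) (x.1 1) (x.1 2)).2.1 * (chg i (y.1 0) (y.1 1) (y.1 2)).2.1 +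
        (chg i (x.1 0) (x.1 1) (x.1 2)).2.2 * (chg i (y.1 0) (y.1 1) (y.1 2)).2.2 =
        r ^ 2 - 1 / 2 := by
      rw [← hi]; fin_cases i <;> simp [chg] <;> ring
    have ex : (chg i (x.1 0) (x.1 1) (x.1 2)).1 ^ 2 + (chg i (x.1 0) (x.1 1) (x.1 2)).2.1 ^ 2 +
        (chg i (x.1 0) (x.1 1) (x.1 2)).2.2 ^ 2 = r ^ 2 := by
      rw [← hnx]; fin_cases i <;> simp [chg] <;> ring
    have ey : (chg i (y.1 0) (y.1 1) (y.1 2)).1 ^ 2 + (chg i (y.1 0) (y.1 1) (y.1 2)).2.1 ^ 2 +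
        (chg i (y.1 0) (y.1 1) (y.1 2)).2.2 ^ 2 = r ^ 2 := by
      rw [← hny]; fin_cases i <;> simp [chg] <;> ring
    rw [e, ex, ey] at this
    nlinarith
end
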